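/- Let L > 0 and let x ∈ ℝ³ satisfy 0 ≤ x_i ≤ L for each coordinate i. Then Σ_{v ∈ {0,1}³} λ_v(x)·‖x − x_v‖² = Σ_{i=1}^3 x_i·(L − x_i). -/

import Mathlib

/-- The vertex of the cube `[0,L]³` indexed by `v ∈ {0,1}³`:
`(x_v) i = L` if `v i = 1` and `0` otherwise. -/
noncomputable def cubeVertex (L : ℝ) (v : Fin 3 → Bool) :
    EuclideanSpace ℝ (Fin 3) :=
  (EuclideanSpace.equiv (Fin 3) ℝ).symm fun i => if v i then L else 0

/-- The trilinear weight of the vertex `v ∈ {0,1}³` of the cube `[0,L]³`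
at the point `x`: `λ_v(x) = ∏ i, (x i / L if v i = 1 else (L - x i) / L)`. -/
noncomputable def triWeight (L : ℝ) (v : Fin 3 → Bool)
    (x : EuclideanSpace ℝ (Fin 3)) : ℝ :=
  ∏ i, if v i then x i / L else (L - x i) / L

/-! The weights are products, over the coordinates, of linear weights that sum to `1` on each axis,
while the squared distance to a vertex is a sum of one-coordinate terms. In each such term the other
coordinates sum out, which leaves the linear average of the squared distances from a point `t` to
the endpoints of a segment `[a, b]`, namely `(t - a) * (b - t)`. -/

section ProductWeights

open Finset

variable {ι R : Type*} {κ : ι → Type*} [Fintype ι] [DecidableEq ι] [∀ i, Fintype (κ i)]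
  [CommSemiring R] {w : ∀ i, κ i → R}

theorem sum_prod_mul_apply_of_sum_eq_one {i : ι} (hw : ∀ j ≠ i, ∑ c, w j c = 1) (g : κ i → R) :
    ∑ v : ∀ j, κ j, (∏ j, w j (v j)) * g (v i) = ∑ c, w i c * g c := by
  let w' : ∀ j, κ j → R := Function.update w i fun c => w i c * g c
  have w'_self : w' i = fun c => w i c * g c := Function.update_self ..
  have w'_of_ne : ∀ j ≠ i, w' j = w j := fun j hj => Function.update_of_ne hj ..
  have prod_w' (v : ∀ j, κ j) : (∏ j, w j (v j)) * g (v i) = ∏ j, w' j (v j) := by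
    rw [← mul_prod_erase univ _ (mem_univ i), ← mul_prod_erase univ _ (mem_univ i), w'_self,
      mul_right_comm]
    congr 1
    exact prod_congr rfl fun j hj => by rw [w'_of_ne j (ne_of_mem_erase hj)]
  calc
    ∑ v : ∀ j, κ j, (∏ j, w j (v j)) * g (v i) = ∏ j, ∑ c, w' j c := by
      simp only [prod_w', Fintype.prod_sum]
    _ = ∑ c, w' i c := Fintype.prod_eq_single i fun j hj => by rw [w'_of_ne j hj, hw j hj]
    _ = ∑ c, w i c * g c := by rw [w'_self]

theorem sum_prod_mul_sum_of_sum_eq_one (hw : ∀ i, ∑ c, w i c = 1) (f : ∀ i, κ i → R) :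
    ∑ v : ∀ i, κ i, (∏ i, w i (v i)) * ∑ i, f i (v i) = ∑ i, ∑ c, w i c * f i c := by
  simp only [mul_sum]
  rw [sum_comm]
  exact sum_congr rfl fun i _ => sum_prod_mul_apply_of_sum_eq_one (fun j _ => hw j) (f i)

end ProductWeights

section LinearWeight

variable {K : Type*} [Field K] {a b : K}

/-- The linear interpolation weight at `t` of an endpoint of the segment from `a` to `b`, where
`true` selects `b` and `false` selects `a`. -/
def linearWeight (a b : K) (c : Bool) (t : K) : K :=
  if c then (t - a) / (b - a) else (b - t) / (b - a)

theorem sum_linearWeight_eq_one (hab : a ≠ b) (t : K) : ∑ c, linearWeight a b c t = 1 := by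
  have hba : b - a ≠ 0 := sub_ne_zero.mpr hab.symm
  simp only [linearWeight, Fintype.sum_bool, if_true, Bool.false_eq_true, if_false]
  field_simp
  ring

theorem sum_linearWeight_mul_sq_sub (hab : a ≠ b) (t : K) :
    ∑ c, linearWeight a b c t * (t - if c then b else a) ^ 2 = (t - a) * (b - t) := by
  have hba : b - a ≠ 0 := sub_ne_zero.mpr hab.symm
  simp only [linearWeight, Fintype.sum_bool, if_true, Bool.false_eq_true, if_false]
  field_simp
  ring

end LinearWeight

section Box

variable {ι : Type*}

/-- The vertex indexed by `v` of the box with opposite corners `a` and `b`, whose `i`-th coordinate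
is `b i` if `v i` is `true` and `a i` otherwise. -/
def boxVertex (a b : ι → ℝ) (v : ι → Bool) : EuclideanSpace ℝ ι :=
  WithLp.toLp 2 fun i => if v i then b i else a i

variable [Fintype ι]

/-- The multilinear interpolation weight at `x` of the vertex `boxVertex a b v`, i.e. the product of
its linear interpolation weights along the coordinate axes. -/
noncomputable def multilinearWeight (a b : ι → ℝ) (v : ι → Bool) (x : EuclideanSpace ℝ ι) : ℝ :=
  ∏ i, linearWeight (a i) (b i) (v i) (x i)

theorem norm_sub_boxVertex_sq (a b : ι → ℝ) (v : ι → Bool) (x : EuclideanSpace ℝ ι) :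
    ‖x - boxVertex a b v‖ ^ 2 = ∑ i, (x i - if v i then b i else a i) ^ 2 :=
  EuclideanSpace.real_norm_sq_eq _

theorem triWeight_sum_sq_dist_general [DecidableEq ι] {a b : ι → ℝ} (hab : ∀ i, a i ≠ b i)
    (x : EuclideanSpace ℝ ι) :
    ∑ v : ι → Bool, multilinearWeight a b v x * ‖x - boxVertex a b v‖ ^ 2 =
      ∑ i, (x i - a i) * (b i - x i) :=
  calc
    _ = ∑ v : ι → Bool, (∏ i, linearWeight (a i) (b i) (v i) (x i)) *
          ∑ i, (x i - if v i then b i else a i) ^ 2 := by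
      simp only [multilinearWeight, norm_sub_boxVertex_sq]
    _ = ∑ i, ∑ c, linearWeight (a i) (b i) c (x i) * (x i - if c then b i else a i) ^ 2 :=
      sum_prod_mul_sum_of_sum_eq_one (fun i => sum_linearWeight_eq_one (hab i) (x i))
        fun i c => (x i - if c then b i else a i) ^ 2
    _ = ∑ i, (x i - a i) * (b i - x i) :=
      Finset.sum_congr rfl fun i _ => sum_linearWeight_mul_sq_sub (hab i) (x i)

end Box

theorem cubeVertex_eq_boxVertex (L : ℝ) (v : Fin 3 → Bool) :
    cubeVertex L v = boxVertex 0 (fun _ => L) v :=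
  rfl

theorem triWeight_eq_multilinearWeight (L : ℝ) (v : Fin 3 → Bool) (x : EuclideanSpace ℝ (Fin 3)) :
    triWeight L v x = multilinearWeight 0 (fun _ => L) v x := by
  simp only [triWeight, multilinearWeight, linearWeight, Pi.zero_apply, sub_zero]

/-- For a point `x` of the cube `[0,L]³`, the trilinear average of the squared
Euclidean distances to the vertices equals `Σ i, x i * (L - x i)`. -/
theorem triWeight_sum_sq_dist
    (L : ℝ) (hL : 0 < L) (x : EuclideanSpace ℝ (Fin 3))
    (hx : ∀ i, 0 ≤ x i ∧ x i ≤ L) :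
    ∑ v : Fin 3 → Bool, triWeight L v x * ‖x - cubeVertex L v‖ ^ 2 =
      ∑ i, x i * (L - x i) := by
  simpa only [cubeVertex_eq_boxVertex, triWeight_eq_multilinearWeight, Pi.zero_apply, sub_zero]
    using triWeight_sum_sq_dist_general (a := 0) (b := fun _ => L) (fun _ => hL.ne) x
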